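/- There is no ATLorig formula that is equivalent, over all concurrent game structures (i.e., true at exactly the same locations of every CGS), to the ATL formula ⟨A⟩(a R b) — equivalently, to ⟨A⟩(b R (a ∨ b)) = ⟨A⟩(a W b) — where a, b are atomic propositions and A is a coalition. -/

import Mathlib

/-!  Core formalization of concurrent game structures (CGS), alternating
transition systems (ATS), and the logic ATL, following Alur-Henzinger-Kupferman
and Laroussinie-Markey-Oreiby, "On the Expressiveness and Complexity of ATL".

A generic "game structure" `GS Agt Loc P M` has locations labelled by atomic
propositions from `P`, and in each location each agent has a set of available
moves (of type `M`); a joint move (one move per agent) leads to a set of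
possible successor locations (a singleton for CGSs, the intersection of the
chosen sets for ATSs). -/

structure GS (Agt Loc P M : Type) where
  lab : Loc → Set P
  mov : Loc → Agt → Set M
  step : Loc → (Agt → M) → Set Loc

namespace GS

variable {Agt Loc P M : Type}

/-- a complete joint move, valid at `ℓ`. -/
def ValidMove (S : GS Agt Loc P M) (ℓ : Loc) (m : Agt → M) : Prop :=
  ∀ a, m a ∈ S.mov ℓ a

/-- `Next ℓ A mA`: locations reachable from `ℓ` when each member `a` of the
coalition `A` plays `mA a` (and the other agents play arbitrary valid moves). -/
def Next (S : GS Agt Loc P M) (ℓ : Loc) (A : Set Agt) (mA : Agt → M) : Set Loc :=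
  {ℓ' | ∃ m, S.ValidMove ℓ m ∧ (∀ a ∈ A, m a = mA a) ∧ ℓ' ∈ S.step ℓ m}

/-- all possible successors of `ℓ`. -/
def NextAll (S : GS Agt Loc P M) (ℓ : Loc) : Set Loc :=
  {ℓ' | ∃ m, S.ValidMove ℓ m ∧ ℓ' ∈ S.step ℓ m}

/-- the controllable predecessors: `ℓ ∈ CPre A T` iff coalition `A` has a move
forcing the next location to be in `T`. -/
def CPre (S : GS Agt Loc P M) (A : Set Agt) (T : Set Loc) : Set Loc :=
  {ℓ | ∃ mA : Agt → M, (∀ a ∈ A, mA a ∈ S.mov ℓ a) ∧ S.Next ℓ A mA ⊆ T}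

theorem cpre_mono (S : GS Agt Loc P M) (A : Set Agt) : Monotone (S.CPre A) := by
  intro T T' h ℓ hℓ
  obtain ⟨mA, hv, hn⟩ := hℓ
  exact ⟨mA, hv, hn.trans h⟩

/-- A strategy maps the (strict) past history and current location to a move
for each agent (only the moves of the coalition members are relevant). -/
def Strat (Agt Loc M : Type) : Type := List Loc → Loc → Agt → M

def StratValid (S : GS Agt Loc P M) (A : Set Agt) (F : Strat Agt Loc M) : Prop :=
  ∀ h ℓ a, a ∈ A → F h ℓ a ∈ S.mov ℓ a

/-- a strategy is memoryless (state-based) if it only depends on the current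
location. -/
def Memoryless (F : Strat Agt Loc M) : Prop :=
  ∀ h h' ℓ a, F h ℓ a = F h' ℓ a

/-- the history `ρ 0, …, ρ (i-1)`. -/
def hist (ρ : ℕ → Loc) (i : ℕ) : List Loc := List.ofFn (fun j : Fin i => ρ j)

/-- computations from `ℓ`. -/
def Comp (S : GS Agt Loc P M) (ℓ : Loc) (ρ : ℕ → Loc) : Prop :=
  ρ 0 = ℓ ∧ ∀ i, ρ (i + 1) ∈ S.NextAll (ρ i)

/-- the outcomes of a strategy `F` of coalition `A` from `ℓ`. -/
def Out (S : GS Agt Loc P M) (A : Set Agt) (ℓ : Loc) (F : Strat Agt Loc M)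
    (ρ : ℕ → Loc) : Prop :=
  ρ 0 = ℓ ∧ ∀ i, ρ (i + 1) ∈ S.Next (ρ i) A (F (hist ρ i) (ρ i))

end GS

/-! ### ATL syntax and semantics -/

mutual
  /-- ATL state formulas. -/
  inductive SForm (Agt P : Type) : Type where
    | tru : SForm Agt P
    | atom : P → SForm Agt P
    | snot : SForm Agt P → SForm Agt P
    | sor : SForm Agt P → SForm Agt P → SForm Agt P
    | coal : Set Agt → PForm Agt P → SForm Agt P
  /-- ATL path formulas. -/
  inductive PForm (Agt P : Type) : Type where
    | pnot : PForm Agt P → PForm Agt P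
    | nxt : SForm Agt P → PForm Agt P
    | untl : SForm Agt P → SForm Agt P → PForm Agt P
end

mutual
  /-- satisfaction of an ATL state formula at a location. -/
  def SSat {Agt Loc P M : Type} (S : GS Agt Loc P M) : SForm Agt P → Loc → Prop
    | .tru, _ => True
    | .atom p, ℓ => p ∈ S.lab ℓ
    | .snot φ, ℓ => ¬ SSat S φ ℓ
    | .sor φ ψ, ℓ => SSat S φ ℓ ∨ SSat S ψ ℓ
    | .coal A φ, ℓ =>
        ∃ F : GS.Strat Agt Loc M, S.StratValid A F ∧
          ∀ ρ : ℕ → Loc, S.Out A ℓ F ρ → PSat S φ ρ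
  /-- satisfaction of an ATL path formula along a sequence of locations. -/
  def PSat {Agt Loc P M : Type} (S : GS Agt Loc P M) : PForm Agt P → (ℕ → Loc) → Prop
    | .pnot φ, ρ => ¬ PSat S φ ρ
    | .nxt φ, ρ => SSat S φ (ρ 1)
    | .untl φ ψ, ρ => ∃ i, SSat S ψ (ρ i) ∧ ∀ j < i, SSat S φ (ρ j)
end

/-- the release modality:  `φ R ψ := ¬((¬φ) U (¬ψ))`. -/
def PForm.rel {Agt P : Type} (φ ψ : SForm Agt P) : PForm Agt P :=
  .pnot (.untl φ.snot ψ.snot)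

/-- the weak-until modality:  `φ W ψ := ψ R (φ ∨ ψ)`. -/
def PForm.wuntl {Agt P : Type} (φ ψ : SForm Agt P) : PForm Agt P :=
  PForm.rel ψ (φ.sor ψ)

/-- conjunction of state formulas. -/
def SForm.sand {Agt P : Type} (φ ψ : SForm Agt P) : SForm Agt P :=
  .snot (.sor φ.snot ψ.snot)

/-- the set of locations satisfying a state formula. -/
def SatSet {Agt Loc P M : Type} (S : GS Agt Loc P M) (φ : SForm Agt P) : Set Loc :=
  {ℓ | SSat S φ ℓ}

/-! ### Concurrent game structures (explicit) and alternating transition systems -/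

/-- an (explicit) concurrent game structure: moves are natural numbers, and the
transition table gives the successor of each joint move. -/
structure CGS (Agt Loc P : Type) where
  lab : Loc → Set P
  chc : Loc → Agt → Finset ℕ
  edg : Loc → (Agt → ℕ) → Loc

namespace CGS

variable {Agt Loc P : Type}

def WellFormed (G : CGS Agt Loc P) : Prop := ∀ ℓ a, (G.chc ℓ a).Nonempty

def toGS (G : CGS Agt Loc P) : GS Agt Loc P ℕ where
  lab := G.lab
  mov ℓ a := ↑(G.chc ℓ a)
  step ℓ m := {G.edg ℓ m}

/-- a CGS is turn-based if in every location at most one agent has more than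
one available move. -/
def TurnBased (G : CGS Agt Loc P) : Prop :=
  ∀ ℓ (a b : Agt), 1 < (G.chc ℓ a).card → 1 < (G.chc ℓ b).card → a = b

end CGS

/-- an alternating transition system: a move of an agent is a set of locations;
a joint move leads to the intersection of the chosen sets (a singleton when the
ATS is well-formed). -/
structure ATS (Agt Loc P : Type) where
  lab : Loc → Set P
  chc : Loc → Agt → Set (Set Loc)

namespace ATS

variable {Agt Loc P : Type}

/-- well-formedness: each agent always has some available move, and each joint
choice of moves intersects in a singleton. -/
def WellFormed (T : ATS Agt Loc P) : Prop :=
  (∀ ℓ a, (T.chc ℓ a).Nonempty) ∧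
  ∀ ℓ (Q : Agt → Set Loc), (∀ a, Q a ∈ T.chc ℓ a) → ∃ ℓ', (⋂ a, Q a) = {ℓ'}

def toGS (T : ATS Agt Loc P) : GS Agt Loc P (Set Loc) where
  lab := T.lab
  mov := T.chc
  step _ Q := ⋂ a, Q a

end ATS

/-! ### The original ATL fragment (path modalities X, G, U only, no path negation) -/

/-- formulas of ATLorig: state formulas built from atoms, boolean connectives
and the modalities `⟨A⟩X`, `⟨A⟩G`, `⟨A⟩U`. -/
inductive OForm (Agt P : Type) : Type where
  | tru : OForm Agt P
  | atom : P → OForm Agt P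
  | onot : OForm Agt P → OForm Agt P
  | oor : OForm Agt P → OForm Agt P → OForm Agt P
  | coalX : Set Agt → OForm Agt P → OForm Agt P
  | coalG : Set Agt → OForm Agt P → OForm Agt P
  | coalU : Set Agt → OForm Agt P → OForm Agt P → OForm Agt P

namespace OForm

variable {Agt P : Type}

/-- size of the syntax tree of an ATLorig formula. -/
def size : OForm Agt P → ℕ
  | .tru => 1
  | .atom _ => 1
  | .onot φ => 1 + φ.size
  | .oor φ ψ => 1 + φ.size + ψ.size
  | .coalX _ φ => 2 + φ.size
  | .coalG _ φ => 2 + φ.size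
  | .coalU _ φ ψ => 2 + φ.size + ψ.size

/-- an ATLorig formula is in particular an ATL formula
(`⟨A⟩G φ` is `⟨A⟩¬(⊤ U ¬φ)`). -/
def toS : OForm Agt P → SForm Agt P
  | .tru => .tru
  | .atom p => .atom p
  | .onot φ => .snot φ.toS
  | .oor φ ψ => .sor φ.toS ψ.toS
  | .coalX A φ => .coal A (.nxt φ.toS)
  | .coalG A φ => .coal A (.pnot (.untl .tru (.snot φ.toS)))
  | .coalU A φ ψ => .coal A (.untl φ.toS ψ.toS)

end OForm

/-- satisfaction of an ATLorig formula. -/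
def OSat {Agt Loc P M : Type} (S : GS Agt Loc P M) (θ : OForm Agt P) (ℓ : Loc) : Prop :=
  SSat S θ.toS ℓ

namespace RelProof

open GS

def Can {Agt Loc P M : Type} (S : GS Agt Loc P M) (A : Set Agt) (Q : (ℕ → Loc) → Prop)
    (ℓ : Loc) : Prop :=
  ∃ F : GS.Strat Agt Loc M, S.StratValid A F ∧ ∀ ρ : ℕ → Loc, S.Out A ℓ F ρ → Q ρ

def cons {Loc : Type} (x : Loc) (ρ : ℕ → Loc) : ℕ → Loc
  | 0 => x
  | i + 1 => ρ i

section general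
variable {Agt Loc P : Type} (G : CGS Agt Loc P)

theorem hist_cons (x : Loc) (ρ : ℕ → Loc) (i : ℕ) :
    hist (cons x ρ) (i + 1) = x :: hist ρ i := by
  simp [hist, List.ofFn_succ, cons]

theorem hist_succ (ρ : ℕ → Loc) (i : ℕ) : hist ρ (i + 1) = hist ρ i ++ [ρ i] := by
  unfold hist
  rw [List.ofFn_succ_last]
  simp

theorem cons_eta (ρ : ℕ → Loc) : ρ = cons (ρ 0) (fun i => ρ (i + 1)) := by
  funext i; cases i <;> rfl

theorem next_nonempty (hG : G.WellFormed) (A : Set Agt) (ℓ : Loc) (mA : Agt → ℕ)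
    (h : ∀ a ∈ A, mA a ∈ G.toGS.mov ℓ a) : ∃ x, x ∈ G.toGS.Next ℓ A mA := by
  classical
  refine ⟨G.edg ℓ (fun a => if a ∈ A then mA a else (hG ℓ a).choose), _, ?_, ?_, rfl⟩
  · intro a
    by_cases ha : a ∈ A
    · simpa [ha] using h a ha
    · simp only [ha, if_false]; exact (hG ℓ a).choose_spec
  · intro a ha; simp [ha]

theorem path_exists (A : Set Agt) (F : GS.Strat Agt Loc ℕ) (ℓ : Loc)
    (nx : List Loc → Loc → Loc) (hn : ∀ h x, nx h x ∈ G.toGS.Next x A (F h x)) :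
    ∃ ρ : ℕ → Loc, G.toGS.Out A ℓ F ρ ∧ ∀ i, ρ (i + 1) = nx (hist ρ i) (ρ i) := by
  let st : ℕ → List Loc × Loc := fun i =>
    Nat.rec ([], ℓ) (fun _ p => (p.1 ++ [p.2], nx p.1 p.2)) i
  have hh : ∀ i, hist (fun i => (st i).2) i = (st i).1 := by
    intro i
    induction i with
    | zero => simp [hist, st]
    | succ i ih => rw [hist_succ, ih]
  have h2 : ∀ i, (st (i + 1)).2 = nx (hist (fun i => (st i).2) i) (st i).2 := by
    intro i; rw [hh]
  refine ⟨fun i => (st i).2, ⟨rfl, fun i => ?_⟩, h2⟩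
  show (st (i + 1)).2 ∈ _
  rw [h2]
  exact hn _ _

theorem can_witness (hG : G.WellFormed) {A : Set Agt} {Q : (ℕ → Loc) → Prop} {ℓ : Loc}
    (h : Can G.toGS A Q ℓ) : ∃ ρ, ρ 0 = ℓ ∧ Q ρ := by
  obtain ⟨F, hF, hQ⟩ := h
  choose nx hn using fun h x => next_nonempty G hG A x (F h x) (fun a ha => hF h x a ha)
  obtain ⟨ρ, hρ, -⟩ := path_exists G A F ℓ nx hn
  exact ⟨ρ, hρ.1, hQ ρ hρ⟩

theorem can_shift {A : Set Agt} {Q : (ℕ → Loc) → Prop} {ℓ : Loc}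
    (h : Can G.toGS A Q ℓ) :
    ℓ ∈ G.toGS.CPre A {x | Can G.toGS A (fun ρ => Q (cons ℓ ρ)) x} := by
  obtain ⟨F, hF, hQ⟩ := h
  refine ⟨F [] ℓ, fun a ha => hF _ _ a ha, fun x hx => ?_⟩
  refine ⟨fun h y => F (ℓ :: h) y, fun h y a ha => hF _ _ a ha, fun ρ hρ => hQ _ ⟨rfl, ?_⟩⟩
  intro i
  cases i with
  | zero => simpa [cons, hist, hρ.1] using hx
  | succ i => rw [hist_cons]; exact hρ.2 i

theorem can_glue (hG : G.WellFormed) {A : Set Agt} {Q : (ℕ → Loc) → Prop} {ℓ : Loc}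
    (h : ℓ ∈ G.toGS.CPre A {x | Can G.toGS A (fun ρ => Q (cons ℓ ρ)) x}) :
    Can G.toGS A Q ℓ := by
  classical
  obtain ⟨mA, hm, hN⟩ := h
  choose dm hdm using fun x (a : Agt) => hG x a
  have key : ∀ x, ∃ F : GS.Strat Agt Loc ℕ, G.toGS.StratValid A F ∧
      (x ∈ G.toGS.Next ℓ A mA → ∀ ρ, G.toGS.Out A x F ρ → Q (cons ℓ ρ)) := by
    intro x
    by_cases hx : x ∈ G.toGS.Next ℓ A mA
    · obtain ⟨F, hF, hQ⟩ := hN hx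
      exact ⟨F, hF, fun _ => hQ⟩
    · exact ⟨fun _ y a => dm y a, fun _ y a _ => hdm y a, fun h => absurd h hx⟩
  choose FF hFF hQ using key
  let F : GS.Strat Agt Loc ℕ := fun h y a =>
    match h with
    | [] => if y = ℓ then mA a else dm y a
    | _ :: h' => FF (h'.headD y) h' y a
  refine ⟨F, ?_, ?_⟩
  · intro h y a ha
    cases h with
    | nil =>
      by_cases hy : y = ℓ
      · subst hy; simpa [F] using hm a ha
      · simp only [F, hy, if_false]; exact hdm y a
    | cons z h' => exact hFF _ _ _ a ha
  · intro ρ hρ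
    have h1 : ρ 1 ∈ G.toGS.Next ℓ A mA := by
      have := hρ.2 0
      simpa [hist, hρ.1, F] using this
    have h2 := hQ (ρ 1) h1 (fun i => ρ (i + 1)) ⟨rfl, fun i => ?_⟩
    · rw [cons_eta ρ, hρ.1]; exact h2
    · have := hρ.2 (i + 1)
      have e : hist ρ (i + 1) = ρ 0 :: hist (fun i => ρ (i + 1)) i := by
        conv_lhs => rw [cons_eta ρ]
        rw [hist_cons]
      have e2 : (hist (fun i => ρ (i + 1)) i).headD (ρ (i + 1)) = ρ 1 := by
        cases i with
        | zero => simp [hist]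
        | succ i => simp [hist, List.ofFn_succ]
      rw [e] at this
      have e3 : F (ρ 0 :: hist (fun i => ρ (i + 1)) i) (ρ (i + 1))
          = FF (ρ 1) (hist (fun i => ρ (i + 1)) i) (ρ (i + 1)) := by
        funext a
        show FF ((hist (fun i => ρ (i + 1)) i).headD (ρ (i + 1))) _ _ a = _
        rw [e2]
      rw [e3] at this
      exact this

theorem can_now (hG : G.WellFormed) {A : Set Agt} {p : Loc → Prop} {ℓ : Loc} :
    Can G.toGS A (fun ρ => p (ρ 0)) ℓ ↔ p ℓ := by
  constructor
  · intro h
    obtain ⟨ρ, h0, hp⟩ := can_witness G hG h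
    exact h0 ▸ hp
  · intro h
    choose dm hdm using fun x (a : Agt) => hG x a
    exact ⟨fun _ y a => dm y a, fun _ y a _ => hdm y a, fun ρ hρ => by
      have := hρ.1
      simpa [this] using h⟩

theorem can_X (hG : G.WellFormed) {A : Set Agt} {p : Loc → Prop} {ℓ : Loc} :
    Can G.toGS A (fun ρ => p (ρ 1)) ℓ ↔ ℓ ∈ G.toGS.CPre A {x | p x} := by
  have e : {x | Can G.toGS A (fun ρ => p (cons ℓ ρ 1)) x} = {x | p x} := by
    ext x; exact can_now G hG
  constructor
  · intro h; have := can_shift G h; rwa [e] at this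
  · intro h; apply can_glue G hG; rwa [e]

def GSet (A : Set Agt) (p : Loc → Prop) : Set Loc :=
  {x | Can G.toGS A (fun ρ => ∀ i, p (ρ i)) x}

def USet (A : Set Agt) (p q : Loc → Prop) : Set Loc :=
  {x | Can G.toGS A (fun ρ => ∃ i, q (ρ i) ∧ ∀ j < i, p (ρ j)) x}

theorem can_mono {A : Set Agt} {Q R : (ℕ → Loc) → Prop} {ℓ : Loc}
    (h : Can G.toGS A Q ℓ) (hQR : ∀ ρ, ρ 0 = ℓ → Q ρ → R ρ) : Can G.toGS A R ℓ := by
  obtain ⟨F, hF, hQ⟩ := h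
  exact ⟨F, hF, fun ρ hρ => hQR ρ hρ.1 (hQ ρ hρ)⟩

theorem G_post (hG : G.WellFormed) {A : Set Agt} {p : Loc → Prop} {ℓ : Loc}
    (h : ℓ ∈ GSet G A p) : p ℓ ∧ ℓ ∈ G.toGS.CPre A (GSet G A p) := by
  constructor
  · obtain ⟨ρ, h0, hp⟩ := can_witness G hG h
    exact h0 ▸ hp 0
  · refine G.toGS.cpre_mono A ?_ (can_shift G h)
    intro x hx
    exact can_mono G hx fun ρ _ hh i => hh (i + 1)

theorem G_greatest (hG : G.WellFormed) {A : Set Agt} {p : Loc → Prop} {Z : Set Loc}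
    (h : ∀ x ∈ Z, p x ∧ x ∈ G.toGS.CPre A Z) : Z ⊆ GSet G A p := by
  intro ℓ hℓ
  have key : ∀ x, ∃ mA : Agt → ℕ, (∀ a ∈ A, mA a ∈ G.toGS.mov x a) ∧
      (x ∈ Z → G.toGS.Next x A mA ⊆ Z) := by
    intro x
    by_cases hx : x ∈ Z
    · obtain ⟨m, h1, h2⟩ := (h x hx).2
      exact ⟨m, h1, fun _ => h2⟩
    · exact ⟨fun a => (hG x a).choose, fun a _ => (hG x a).choose_spec, fun h => absurd h hx⟩
  choose m hm hZ using key
  refine ⟨fun _ x => m x, fun _ x a ha => hm x a ha, fun ρ hρ => ?_⟩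
  have : ∀ i, ρ i ∈ Z := by
    intro i
    induction i with
    | zero => rw [hρ.1]; exact hℓ
    | succ i ih => exact hZ _ ih (hρ.2 i)
  exact fun i => (h _ (this i)).1

theorem U_closed (hG : G.WellFormed) {A : Set Agt} {p q : Loc → Prop} {ℓ : Loc}
    (h : q ℓ ∨ (p ℓ ∧ ℓ ∈ G.toGS.CPre A (USet G A p q))) : ℓ ∈ USet G A p q := by
  rcases h with h | ⟨hp, h⟩
  · exact can_mono G ((can_now G hG (A := A) (p := q)).2 h)
      fun ρ _ h => ⟨0, h, fun j hj => absurd hj (by omega)⟩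
  · apply can_glue G hG
    refine G.toGS.cpre_mono A ?_ h
    intro x hx
    refine can_mono G hx ?_
    rintro ρ - ⟨i, hi, hj⟩
    refine ⟨i + 1, hi, fun j hj' => ?_⟩
    cases j with
    | zero => exact hp
    | succ j => exact hj j (by omega)

theorem U_least (hG : G.WellFormed) {A : Set Agt} {p q : Loc → Prop} {T : Set Loc}
    (h : ∀ x, (q x ∨ (p x ∧ x ∈ G.toGS.CPre A T)) → x ∈ T) : USet G A p q ⊆ T := by
  intro ℓ hℓ
  by_contra hT
  obtain ⟨F, hF, hQ⟩ := hℓ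
  have key : ∀ hs x, ∃ y, y ∈ G.toGS.Next x A (F hs x) ∧ (x ∉ T → p x → y ∉ T) := by
    intro hs x
    by_cases hx : x ∉ T ∧ p x
    · have : ¬ (G.toGS.Next x A (F hs x) ⊆ T) := fun hh =>
        hx.1 (h x (Or.inr ⟨hx.2, F hs x, fun a ha => hF _ _ a ha, hh⟩))
      obtain ⟨y, hy, hyT⟩ := Set.not_subset.1 this
      exact ⟨y, hy, fun _ _ => hyT⟩
    · obtain ⟨y, hy⟩ := next_nonempty G hG A x (F hs x) (fun a ha => hF _ _ a ha)
      exact ⟨y, hy, fun h1 h2 => absurd ⟨h1, h2⟩ hx⟩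
  choose nx h1 h2 using key
  obtain ⟨ρ, hρ, hn⟩ := path_exists G A F ℓ nx h1
  obtain ⟨i, hi, hj⟩ := hQ ρ hρ
  have : ∀ j ≤ i, ρ j ∉ T := by
    intro j
    induction j with
    | zero => intro _; rw [hρ.1]; exact hT
    | succ j ih => intro hji; rw [hn]; exact h2 _ _ (ih (by omega)) (hj j (by omega))
  exact this i le_rfl (h _ (Or.inl hi))

end general

section game
variable (n : ℕ)

abbrev L := Fin (n + 2) ⊕ Bool

def pre (i : Fin (n + 2)) : L n :=
  if i.1 = 0 then .inr false else .inl ⟨i.1 - 1, by omega⟩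

def out : L n → ℕ → Bool → L n
  | .inr _, _, _ => .inr false
  | .inl i, r, true => if r = 1 then pre n i else .inl i
  | .inl i, r, false => if r = 1 ∨ (r = 2 ∧ i.1 = n + 1) then .inr true else .inr false

def Gm : CGS (Fin 2) (L n) (Fin 2) where
  lab x := match x with
    | .inl _ => {1}
    | .inr true => {0, 1}
    | .inr false => ∅
  chc _ a := if a = 0 then Finset.range 6 else Finset.range 2
  edg x m := out n x (m 0 / 2) (decide ((m 0 + m 1) % 2 = 0))

theorem Gm_wf : (Gm n).WellFormed := by
  intro x a
  by_cases h : a = 0 <;> simp [Gm, h]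

theorem mov0 (x : L n) (k : ℕ) : k ∈ (Gm n).toGS.mov x 0 ↔ k < 6 := by
  simp [Gm, CGS.toGS]
theorem mov1 (x : L n) (k : ℕ) : k ∈ (Gm n).toGS.mov x 1 ↔ k < 2 := by
  simp [Gm, CGS.toGS]

theorem mem_next (x y : L n) (A : Set (Fin 2)) (mA : Fin 2 → ℕ) :
    y ∈ (Gm n).toGS.Next x A mA ↔ ∃ k l, k < 6 ∧ l < 2 ∧ ((0 : Fin 2) ∈ A → k = mA 0) ∧
      ((1 : Fin 2) ∈ A → l = mA 1) ∧ y = out n x (k / 2) (decide ((k + l) % 2 = 0)) := by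
  constructor
  · rintro ⟨m, hm, hA, hy⟩
    exact ⟨m 0, m 1, (mov0 n x _).1 (hm 0), (mov1 n x _).1 (hm 1), hA 0, hA 1, hy⟩
  · rintro ⟨k, l, hk, hl, h0, h1, rfl⟩
    refine ⟨![k, l], ?_, ?_, rfl⟩
    · intro a; fin_cases a
      · exact (mov0 n x _).2 hk
      · exact (mov1 n x _).2 hl
    · intro a; fin_cases a
      · exact h0
      · exact h1

theorem pick (l : ℕ) (r : ℕ) (b : Bool) (hr : r < 3) :
    ∃ k, k < 6 ∧ k / 2 = r ∧ decide ((k + l) % 2 = 0) = b := by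
  rcases Nat.mod_two_eq_zero_or_one l with h | h <;> cases b
  · exact ⟨2 * r + 1, by omega, by omega, by simp; omega⟩
  · exact ⟨2 * r, by omega, by omega, by simp; omega⟩
  · exact ⟨2 * r, by omega, by omega, by simp; omega⟩
  · exact ⟨2 * r + 1, by omega, by omega, by simp; omega⟩

theorem pick' (k : ℕ) (b : Bool) : ∃ l, l < 2 ∧ decide ((k + l) % 2 = 0) = b := by
  rcases Nat.mod_two_eq_zero_or_one k with h | h <;> cases b
  · exact ⟨1, by omega, by simp; omega⟩
  · exact ⟨0, by omega, by simp; omega⟩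
  · exact ⟨0, by omega, by simp; omega⟩
  · exact ⟨1, by omega, by simp; omega⟩

theorem cpre_all {A : Set (Fin 2)} (h0 : (0 : Fin 2) ∉ A) (T : Set (L n)) (x : L n) :
    x ∈ (Gm n).toGS.CPre A T ↔ ∀ r < 3, ∀ b, out n x r b ∈ T := by
  constructor
  · rintro ⟨mA, hm, hN⟩ r hr b
    by_cases h1 : (1 : Fin 2) ∈ A
    · obtain ⟨k, hk, rfl, rfl⟩ := pick (mA 1) r b hr
      exact hN ((mem_next n _ _ _ _).2 ⟨k, mA 1, hk, (mov1 n x _).1 (hm 1 h1),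
        fun h => absurd h h0, fun _ => rfl, rfl⟩)
    · obtain ⟨k, hk, rfl, rfl⟩ := pick 0 r b hr
      exact hN ((mem_next n _ _ _ _).2 ⟨k, 0, hk, by omega,
        fun h => absurd h h0, fun h => absurd h h1, rfl⟩)
  · intro h
    refine ⟨fun _ => 0, ?_, ?_⟩
    · intro a _; fin_cases a
      · exact (mov0 n x _).2 (by simp)
      · exact (mov1 n x _).2 (by simp)
    · intro y hy
      obtain ⟨k, l, hk, hl, -, -, rfl⟩ := (mem_next n _ _ _ _).1 hy
      exact h _ (by omega) _

theorem cpre_one {A : Set (Fin 2)} (h0 : (0 : Fin 2) ∈ A) (h1 : (1 : Fin 2) ∉ A)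
    (T : Set (L n)) (x : L n) :
    x ∈ (Gm n).toGS.CPre A T ↔ ∃ r < 3, ∀ b, out n x r b ∈ T := by
  constructor
  · rintro ⟨mA, hm, hN⟩
    have hk := (mov0 n x _).1 (hm 0 h0)
    refine ⟨mA 0 / 2, by omega, fun b => ?_⟩
    obtain ⟨l, hl, rfl⟩ := pick' (mA 0) b
    exact hN ((mem_next n _ _ _ _).2 ⟨mA 0, l, hk, hl,
        fun h => rfl, fun h => absurd h h1, rfl⟩)
  · rintro ⟨r, hr, h⟩
    refine ⟨fun _ => 2 * r, ?_, ?_⟩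
    · intro a ha
      have : a = 0 := by
        fin_cases a
        · rfl
        · exact absurd ha h1
      subst this
      exact (mov0 n x _).2 (by show 2 * r < 6; omega)
    · intro y hy
      obtain ⟨k, l, hk, hl, e, -, rfl⟩ := (mem_next n _ _ _ _).1 hy
      have e := e h0
      have : k / 2 = r := by omega
      rw [this]
      exact h _

theorem cpre_two {A : Set (Fin 2)} (h0 : (0 : Fin 2) ∈ A) (h1 : (1 : Fin 2) ∈ A)
    (T : Set (L n)) (x : L n) :
    x ∈ (Gm n).toGS.CPre A T ↔ ∃ r < 3, ∃ b, out n x r b ∈ T := by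
  constructor
  · rintro ⟨mA, hm, hN⟩
    have hk := (mov0 n x _).1 (hm 0 h0)
    have hl := (mov1 n x _).1 (hm 1 h1)
    exact ⟨mA 0 / 2, by omega, _, hN ((mem_next n _ _ _ _).2 ⟨mA 0, mA 1, hk, hl,
        fun h => rfl, fun h => rfl, rfl⟩)⟩
  · rintro ⟨r, hr, b, h⟩
    obtain ⟨k, hk, rfl, rfl⟩ := pick 0 r b hr
    refine ⟨![k, 0], ?_, ?_⟩
    · intro a _; fin_cases a
      · exact (mov0 n x _).2 hk
      · exact (mov1 n x _).2 (by simp)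
    · intro y hy
      obtain ⟨k', l, hk', hl, e, e', rfl⟩ := (mem_next n _ _ _ _).1 hy
      have e1 : k' = k := e h0
      have e2 : l = 0 := e' h1
      rw [e1, e2]
      exact h

/-- locations of index at least `k`. -/
def C (k : ℕ) : Set (L n) := {x | ∃ i : Fin (n + 2), x = .inl i ∧ k ≤ i.1}

theorem C_mono {k k' : ℕ} (h : k ≤ k') : C n k' ⊆ C n k := by
  rintro x ⟨i, rfl, hi⟩; exact ⟨i, rfl, h.trans hi⟩

theorem pre_pos (i : Fin (n + 2)) (k : ℕ) (h : i.1 = k + 1) :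
    pre n i = .inl ⟨k, by omega⟩ := by
  simp [pre, h]

theorem out00 (i : Fin (n + 2)) : out n (.inl i) 0 true = .inl i := rfl
theorem out01 (i : Fin (n + 2)) : out n (.inl i) 0 false = .inr false := by simp [out]
theorem out10 (i : Fin (n + 2)) : out n (.inl i) 1 true = pre n i := rfl
theorem out11 (i : Fin (n + 2)) : out n (.inl i) 1 false = .inr true := by simp [out]
theorem out20 (i : Fin (n + 2)) : out n (.inl i) 2 true = .inl i := rfl
theorem out21 (i : Fin (n + 2)) :
    out n (.inl i) 2 false = if i.1 = n + 1 then .inr true else .inr false := by simp [out]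

theorem all3 {q : ℕ → Prop} : (∀ r < 3, q r) ↔ q 0 ∧ q 1 ∧ q 2 := by
  constructor
  · intro h; exact ⟨h 0 (by omega), h 1 (by omega), h 2 (by omega)⟩
  · rintro ⟨h0, h1, h2⟩ r hr
    interval_cases r <;> assumption

theorem ex3 {q : ℕ → Prop} : (∃ r < 3, q r) ↔ q 0 ∨ q 1 ∨ q 2 := by
  constructor
  · rintro ⟨r, hr, h⟩
    interval_cases r <;> tauto
  · rintro (h | h | h)
    · exact ⟨0, by omega, h⟩
    · exact ⟨1, by omega, h⟩
    · exact ⟨2, by omega, h⟩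

theorem cpre_inr (A : Set (Fin 2)) (T : Set (L n)) (b : Bool) :
    (.inr b : L n) ∈ (Gm n).toGS.CPre A T ↔ (.inr false : L n) ∈ T := by
  by_cases h0 : (0 : Fin 2) ∈ A
  · by_cases h1 : (1 : Fin 2) ∈ A
    · rw [cpre_two n h0 h1, ex3]; simp [out]
    · rw [cpre_one n h0 h1, ex3]; simp [out]
  · rw [cpre_all n h0, all3]; simp [out]

theorem cpreA {A : Set (Fin 2)} (h0 : (0 : Fin 2) ∉ A) (T : Set (L n)) (i : Fin (n + 2)) :
    (.inl i : L n) ∈ (Gm n).toGS.CPre A T ↔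
      .inl i ∈ T ∧ .inr false ∈ T ∧ pre n i ∈ T ∧ .inr true ∈ T := by
  rw [cpre_all n h0, all3]
  simp only [Bool.forall_bool, out00, out01, out10, out11, out20, out21]
  split_ifs <;> tauto

theorem cpreB {A : Set (Fin 2)} (h0 : (0 : Fin 2) ∈ A) (h1 : (1 : Fin 2) ∉ A)
    (T : Set (L n)) (i : Fin (n + 2)) :
    (.inl i : L n) ∈ (Gm n).toGS.CPre A T ↔
      (.inl i ∈ T ∧ .inr false ∈ T) ∨ (pre n i ∈ T ∧ .inr true ∈ T) ∨
      (i.1 = n + 1 ∧ .inl i ∈ T ∧ .inr true ∈ T) := by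
  rw [cpre_one n h0 h1, ex3]
  simp only [Bool.forall_bool, out00, out01, out10, out11, out20, out21]
  split_ifs <;> tauto

theorem cpreC {A : Set (Fin 2)} (h0 : (0 : Fin 2) ∈ A) (h1 : (1 : Fin 2) ∈ A)
    (T : Set (L n)) (i : Fin (n + 2)) :
    (.inl i : L n) ∈ (Gm n).toGS.CPre A T ↔
      .inl i ∈ T ∨ .inr false ∈ T ∨ pre n i ∈ T ∨ .inr true ∈ T := by
  rw [cpre_two n h0 h1, ex3]
  simp only [Bool.exists_bool, out00, out01, out10, out11, out20, out21]
  split_ifs <;> tauto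

def Const (p : L n → Prop) (k : ℕ) : Prop := ∀ x ∈ C n k, ∀ y ∈ C n k, p x → p y

theorem Const.mono {p : L n → Prop} {k k' : ℕ} (h : Const n p k) (hk : k ≤ k') :
    Const n p k' := fun x hx y hy => h x (C_mono n hk hx) y (C_mono n hk hy)

theorem pre_mem {i : Fin (n + 2)} {k : ℕ} (h : k + 1 ≤ i.1) : pre n i ∈ C n k := by
  rw [pre_pos n i (i.1 - 1) (by omega)]
  exact ⟨_, rfl, by simp; omega⟩

theorem const_X {p : L n → Prop} {k : ℕ} (A : Set (Fin 2)) (h : Const n p k) :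
    Const n (fun x => x ∈ (Gm n).toGS.CPre A {y | p y}) (k + 1) := by
  rintro x ⟨i, rfl, hi⟩ y ⟨j, rfl, hj⟩
  have mi : (.inl i : L n) ∈ C n k := ⟨i, rfl, by omega⟩
  have mj : (.inl j : L n) ∈ C n k := ⟨j, rfl, by omega⟩
  have e1 := h _ mi _ mj
  have e2 := h _ (pre_mem n hi) _ mj
  have e3 := h _ mi _ (pre_mem n hj)
  have e4 := h _ (pre_mem n hi) _ (pre_mem n hj)
  by_cases h0 : (0 : Fin 2) ∈ A
  · by_cases h1 : (1 : Fin 2) ∈ A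
    · simp only [cpreC n h0 h1, Set.mem_ofPred_eq]; tauto
    · simp only [cpreB n h0 h1, Set.mem_ofPred_eq]; tauto
  · simp only [cpreA n h0, Set.mem_ofPred_eq]; tauto

/-- going down from `i` to `k`. -/
theorem down {T : Set (L n)} {k : ℕ} (hk : k < n + 2)
    (hT : ∀ i : Fin (n + 2), k + 1 ≤ i.1 → .inl i ∈ T → pre n i ∈ T) :
    ∀ m, ∀ hm : m < n + 2, k ≤ m → (.inl ⟨m, hm⟩ : L n) ∈ T → (.inl ⟨k, hk⟩ : L n) ∈ T := by
  intro m hm hkm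
  induction m, hkm using Nat.le_induction with
  | base => exact id
  | succ m hkm ih =>
    intro h
    have := hT ⟨m + 1, hm⟩ (by simp; omega) h
    rw [pre_pos n _ m rfl] at this
    exact ih _ this

theorem up {T : Set (L n)} {k : ℕ} (hk : k < n + 2)
    (hT : ∀ i : Fin (n + 2), k + 1 ≤ i.1 → pre n i ∈ T → .inl i ∈ T)
    (h : (.inl ⟨k, hk⟩ : L n) ∈ T) :
    ∀ m, ∀ hm : m < n + 2, k ≤ m → (.inl ⟨m, hm⟩ : L n) ∈ T := by
  intro m hm hkm
  induction m, hkm using Nat.le_induction with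
  | base => exact h
  | succ m hkm ih =>
    apply hT ⟨m + 1, hm⟩ (by simp; omega)
    rw [pre_pos n _ m rfl]
    exact ih _

theorem const_G {p : L n → Prop} {k : ℕ} (A : Set (Fin 2)) (h : Const n p k) :
    Const n (fun x => x ∈ GSet (Gm n) A p) (k + 1) := by
  rintro x ⟨i, rfl, hi⟩ y hy hx
  have wf := Gm_wf n
  obtain ⟨hp, hc⟩ := G_post _ wf hx
  have mi : (.inl i : L n) ∈ C n k := ⟨i, rfl, by omega⟩
  have hpC : ∀ z ∈ C n k, p z := fun z hz => h _ mi _ hz hp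
  have hgb : (.inr true : L n) ∈ GSet (Gm n) A p → (.inr false : L n) ∈ GSet (Gm n) A p :=
    fun hg => (cpre_inr n _ _ _).1 (G_post _ wf hg).2
  refine G_greatest (Gm n) wf (Z := GSet (Gm n) A p ∪ C n (k + 1)) ?_ (Or.inr hy)
  rintro z (hz | ⟨j, rfl, hj⟩)
  · obtain ⟨h1, h2⟩ := G_post _ wf hz
    exact ⟨h1, (Gm n).toGS.cpre_mono A Set.subset_union_left h2⟩
  have mj : (.inl j : L n) ∈ C n (k + 1) := ⟨j, rfl, hj⟩
  refine ⟨hpC _ (C_mono n (Nat.le_succ k) mj), ?_⟩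
  by_cases h0 : (0 : Fin 2) ∈ A
  · by_cases h1 : (1 : Fin 2) ∈ A
    · rw [cpreC n h0 h1]; exact Or.inl (Or.inr mj)
    · rw [cpreB n h0 h1] at hc ⊢
      exact Or.inl ⟨Or.inr mj, Or.inl (by tauto)⟩
  · rw [cpreA n h0] at hc ⊢
    refine ⟨Or.inr mj, Or.inl hc.2.1, ?_, Or.inl hc.2.2.2⟩
    by_cases hj' : j.1 = k + 1
    · left
      rw [pre_pos n j k hj']
      refine down n (by omega) ?_ i.1 i.2 (by omega) hx
      intro i' _ hi'
      exact ((cpreA n h0 _ _).1 (G_post _ wf hi').2).2.2.1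
    · right
      exact pre_mem n (by omega)

theorem const_U {p q : L n → Prop} {k : ℕ} (A : Set (Fin 2)) (h : Const n p k)
    (hq : Const n q k) :
    Const n (fun x => x ∈ USet (Gm n) A p q) (k + 1) := by
  rintro x hx y hy hxU
  show y ∈ USet (Gm n) A p q
  have wf := Gm_wf n
  have hsub : C n (k + 1) ⊆ C n k := C_mono n (Nat.le_succ k)
  by_cases hqx : q x
  · exact U_closed _ wf (Or.inl (hq _ (hsub hx) _ (hsub hy) hqx))
  have hqC : ∀ z ∈ C n k, ¬ q z := fun z hz hqz => hqx (hq _ hz _ (hsub hx) hqz)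
  have hex : ∃ z, z ∈ C n (k + 1) ∧ p z ∧
      z ∈ (Gm n).toGS.CPre A (USet (Gm n) A p q \ C n (k + 1)) := by
    by_contra hne
    push Not at hne
    refine (U_least (Gm n) wf (T := USet (Gm n) A p q \ C n (k + 1)) ?_ hxU).2 hx
    intro z hz
    refine ⟨U_closed _ wf ?_, fun hzC => ?_⟩
    · exact hz.imp id fun hh => ⟨hh.1, (Gm n).toGS.cpre_mono A Set.sdiff_subset hh.2⟩
    · rcases hz with hz | hz
      · exact hqC z (hsub hzC) hz
      · exact hne z hzC hz.1 hz.2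
  obtain ⟨z, hz, hpz, hzc⟩ := hex
  have hpC : ∀ w ∈ C n k, p w := fun w hw => h _ (hsub hz) _ hw hpz
  obtain ⟨i, rfl, hi⟩ := hz
  obtain ⟨j, rfl, hj⟩ := hy
  have hkn : k < n + 2 := by omega
  have hpre : pre n i ∈ USet (Gm n) A p q \ C n (k + 1) →
      (.inl ⟨k, hkn⟩ : L n) ∈ USet (Gm n) A p q := by
    rintro ⟨h1, h2⟩
    have : i.1 = k + 1 := by
      by_contra hne
      exact h2 (pre_mem n (by omega))
    rwa [pre_pos n i k this] at h1
  have hni : (.inl i : L n) ∉ USet (Gm n) A p q \ C n (k + 1) := fun hh => hh.2 ⟨i, rfl, hi⟩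
  have hcl : ∀ j : Fin (n + 2), k + 1 ≤ j.1 →
      (.inl j : L n) ∈ (Gm n).toGS.CPre A (USet (Gm n) A p q) →
      (.inl j : L n) ∈ USet (Gm n) A p q := fun j hj hc =>
    U_closed _ wf (Or.inr ⟨hpC _ ⟨j, rfl, by omega⟩, hc⟩)
  by_cases h0 : (0 : Fin 2) ∈ A
  · by_cases h1 : (1 : Fin 2) ∈ A
    · rw [cpreC n h0 h1] at hzc
      rcases hzc with hh | hh | hh | hh
      · exact absurd hh hni
      · exact hcl j hj ((cpreC n h0 h1 _ _).2 (Or.inr (Or.inl hh.1)))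
      · refine up n hkn ?_ (hpre hh) j.1 j.2 (by omega)
        intro j' hj' hh'
        exact hcl j' hj' ((cpreC n h0 h1 _ _).2 (Or.inr (Or.inr (Or.inl hh'))))
      · exact hcl j hj ((cpreC n h0 h1 _ _).2 (Or.inr (Or.inr (Or.inr hh.1))))
    · rw [cpreB n h0 h1] at hzc
      rcases hzc with hh | hh | hh
      · exact absurd hh.1 hni
      · refine up n hkn ?_ (hpre hh.1) j.1 j.2 (by omega)
        intro j' hj' hh'
        exact hcl j' hj' ((cpreB n h0 h1 _ _).2 (Or.inr (Or.inl ⟨hh', hh.2.1⟩)))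
      · exact absurd hh.2.1 hni
  · rw [cpreA n h0] at hzc
    exact absurd hzc.1 hni

theorem lab_inl (i : Fin (n + 2)) : (Gm n).toGS.lab (.inl i) = {1} := rfl

theorem const_main (θ : OForm (Fin 2) (Fin 2)) :
    ∀ k, θ.size ≤ k → Const n (fun x => OSat (Gm n).toGS θ x) k := by
  have wf := Gm_wf n
  induction θ with
  | tru => intro k _ x _ y _ _; simp [OSat, OForm.toS, SSat]
  | atom a =>
    rintro k _ x ⟨i, rfl, _⟩ y ⟨j, rfl, _⟩
    simp [OSat, OForm.toS, SSat, lab_inl]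
  | onot φ ih =>
    intro k hk x hx y hy
    have := ih k (by simp [OForm.size] at hk; omega) y hy x hx
    simp only [OSat, OForm.toS, SSat] at this ⊢
    tauto
  | oor φ ψ ih1 ih2 =>
    intro k hk x hx y hy
    have h1 := ih1 k (by simp [OForm.size] at hk; omega) x hx y hy
    have h2 := ih2 k (by simp [OForm.size] at hk; omega) x hx y hy
    simp only [OSat, OForm.toS, SSat] at h1 h2 ⊢
    tauto
  | coalX A φ ih =>
    intro k hk
    simp only [OForm.size] at hk
    have h1 := (const_X n A (ih φ.size le_rfl)).mono n (k' := k) (by omega)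
    have e : (fun x => OSat (Gm n).toGS (.coalX A φ) x) =
        fun x => x ∈ (Gm n).toGS.CPre A {y | OSat (Gm n).toGS φ y} := by
      funext x
      rw [← can_X _ wf]
      simp only [OSat, OForm.toS, SSat, PSat, Can]
    rw [e]; exact h1
  | coalG A φ ih =>
    intro k hk
    simp only [OForm.size] at hk
    have h1 := (const_G n A (ih φ.size le_rfl)).mono n (k' := k) (by omega)
    have e : (fun x => OSat (Gm n).toGS (.coalG A φ) x) =
        fun x => x ∈ GSet (Gm n) A (fun y => OSat (Gm n).toGS φ y) := by
      funext x
      simp [OSat, OForm.toS, SSat, PSat, Can, GSet]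
    rw [e]; exact h1
  | coalU A φ ψ ih1 ih2 =>
    intro k hk
    simp only [OForm.size] at hk
    have h1 := (const_U n A (ih1 (φ.size + ψ.size) (by omega))
      (ih2 (φ.size + ψ.size) (by omega))).mono n (k' := k) (by omega)
    have e : (fun x => OSat (Gm n).toGS (.coalU A φ ψ) x) =
        fun x => x ∈ USet (Gm n) A (fun y => OSat (Gm n).toGS φ y)
          (fun y => OSat (Gm n).toGS ψ y) := by
      funext x
      simp only [OSat, OForm.toS, SSat, PSat, Can, USet, Set.mem_ofPred_eq]
    rw [e]; exact h1

def RelQ (ρ : ℕ → L n) : Prop :=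
  ¬ ∃ i, (1 : Fin 2) ∉ (Gm n).toGS.lab (ρ i) ∧ ∀ j < i, (0 : Fin 2) ∉ (Gm n).toGS.lab (ρ j)

theorem rel_iff (x : L n) :
    SSat (Gm n).toGS (.coal ({0} : Set (Fin 2)) (PForm.rel (.atom 0) (.atom 1))) x ↔
      Can (Gm n).toGS {0} (RelQ n) x := by
  simp only [SSat, PForm.rel, PSat, Can, RelQ]

theorem good (x : L n) (hx : x = .inl ⟨n + 1, by omega⟩) :
    Can (Gm n).toGS {0} (RelQ n) x := by
  have h6 : ∀ y a, (![4, 0] : Fin 2 → ℕ) a ∈ (Gm n).toGS.mov y a := by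
    intro y a
    fin_cases a
    · exact (mov0 n y _).2 (by simp)
    · exact (mov1 n y _).2 (by simp)
  refine ⟨fun _ _ => ![4, 0], fun _ y a _ => h6 y a, fun ρ hρ => ?_⟩
  rintro ⟨i, hi, hj⟩
  have key : ∀ m ≤ i, ρ m = x ∨ ρ m = .inr true := by
    intro m
    induction m with
    | zero => intro _; exact Or.inl hρ.1
    | succ m ih =>
      intro hm
      rcases ih (by omega) with e | e
      · obtain ⟨k, l, hk, hl, h0, -, hr⟩ := (mem_next n _ _ _ _).1 (hρ.2 m)
        have h0 : k = 4 := h0 rfl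
        subst h0
        rw [hr, e, hx]
        cases decide ((4 + l) % 2 = 0)
        · right; simp [out]
        · left; rfl
      · exact absurd (show (0 : Fin 2) ∈ (Gm n).toGS.lab (ρ m) by
          rw [e]; simp [Gm, CGS.toGS]) (hj m (by omega))
  rcases key i le_rfl with e | e
  · apply hi; rw [e, hx, lab_inl]; rfl
  · apply hi; rw [e]; simp [Gm, CGS.toGS]

theorem rel_shift {y : L n} (hy : (0 : Fin 2) ∉ (Gm n).toGS.lab y) (ρ : ℕ → L n)
    (h : RelQ n (cons y ρ)) : RelQ n ρ := by
  rintro ⟨i, hi, hj⟩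
  refine h ⟨i + 1, hi, fun j hj' => ?_⟩
  cases j with
  | zero => exact hy
  | succ j => exact hj j (by omega)

theorem bad_no : ¬ Can (Gm n).toGS {0} (RelQ n) (.inr false) := by
  intro h
  obtain ⟨ρ, h0, hr⟩ := can_witness _ (Gm_wf n) h
  exact hr ⟨0, by rw [h0]; simp [Gm, CGS.toGS], fun j hj => absurd hj (by omega)⟩

theorem lose (m : ℕ) (hm : m ≤ n) :
    ¬ Can (Gm n).toGS {0} (RelQ n) (.inl ⟨m, by omega⟩) := by
  induction m with
  | zero =>
    intro h
    have h2 := (Gm n).toGS.cpre_mono {0}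
      (b := {x | Can (Gm n).toGS {0} (RelQ n) x}) (fun x hx => can_mono _ hx
      fun ρ _ => rel_shift n (by simp [lab_inl]) ρ) (can_shift _ h)
    rw [cpreB n (A := {0}) (by simp) (by simp)] at h2
    rcases h2 with h2 | h2 | h2
    · exact bad_no n h2.2
    · have := h2.1
      simp only [pre, if_true] at this
      exact bad_no n this
    · simp at h2
  | succ m ih =>
    intro h
    have h2 := (Gm n).toGS.cpre_mono {0}
      (b := {x | Can (Gm n).toGS {0} (RelQ n) x}) (fun x hx => can_mono _ hx
      fun ρ _ => rel_shift n (by simp [lab_inl]) ρ) (can_shift _ h)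
    rw [cpreB n (A := {0}) (by simp) (by simp)] at h2
    rcases h2 with h2 | h2 | h2
    · exact bad_no n h2.2
    · have := h2.1
      rw [pre_pos n _ m rfl] at this
      exact ih (by omega) this
    · have := h2.1
      simp at this
      omega

end game
end RelProof

/-! ### Statement 0

There is no ATLorig formula equivalent, over all concurrent game structures, to
the ATL formula `⟨A⟩(a R b)`.  Following the paper we take two players
`Agt = Fin 2`, two atomic propositions `a = 0`, `b = 1 : Fin 2`, and the
coalition `A = {A₁} = {0}`. -/
theorem no_ATLorig_formula_for_release :
    ¬ ∃ θ : OForm (Fin 2) (Fin 2),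
        ∀ (Loc : Type) [Fintype Loc] (G : CGS (Fin 2) Loc (Fin 2)),
          G.WellFormed → ∀ ℓ : Loc,
            (OSat G.toGS θ ℓ ↔
              SSat G.toGS
                (.coal ({0} : Set (Fin 2)) (PForm.rel (.atom 0) (.atom 1))) ℓ) := by
  rintro ⟨θ, h⟩
  have wf := RelProof.Gm_wf θ.size
  have h1 := (h _ _ wf (.inl ⟨θ.size + 1, by omega⟩)).2
    ((RelProof.rel_iff _ _).2 (RelProof.good _ _ rfl))
  have h2 := RelProof.const_main θ.size θ θ.size le_rfl _ ⟨_, rfl, by simp⟩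
    (.inl ⟨θ.size, by omega⟩) ⟨_, rfl, le_rfl⟩ h1
  exact RelProof.lose θ.size θ.size le_rfl
    ((RelProof.rel_iff _ _).1 ((h _ _ wf _).1 h2))
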